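/- For the class of finite-dimensional complex normed spaces, the following three properties are equivalent: (1) the approximate Ramsey property: for all finite-dimensional complex normed spaces X, Y and ε > 0 there is a finite-dimensional complex normed space Z such that every 1-Lipschitz map c from the set Emb(X,Z) of linear isometric embeddings of X into Z (with the operator-norm metric) to [0,1] satisfies |c(γ∘η₀) − c(γ∘η₁)| ≤ ε for some linear isometric embedding γ : Y → Z and all η₀, η₁ ∈ Emb(X,Y); (2) the discrete approximate Ramsey property: for all X, Y, every r ∈ ℕ, and ε > 0 there is Z such that every coloring of Emb(X,Z) with r colors admits a linear isometric embedding γ : Y → Z and a color j such that each γ∘η with η ∈ Emb(X,Y) is within operator-norm distance ε of an element of Emb(X,Z) of color j; (3) the compact approximate Ramsey property: for all X, Y, every compact metric space K, and ε > 0 there is Z such that every 1-Lipschitz map c : Emb(X,Z) → K satisfies d_K(c(γ∘η₀), c(γ∘η₁)) ≤ ε for some linear isometric embedding γ : Y → Z and all η₀, η₁ ∈ Emb(X,Y). -/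

import Mathlib

universe u

/-- A linear isometric embedding between normed spaces. -/
def IsLinIsomEmb {X Y : Type*} [NormedAddCommGroup X] [NormedSpace ℂ X]
    [NormedAddCommGroup Y] [NormedSpace ℂ Y] (φ : X →L[ℂ] Y) : Prop :=
  ∀ x, ‖φ x‖ = ‖x‖

/-- The approximate Ramsey property (with `[0,1]`-valued `1`-Lipschitz colorings) of the class
of finite-dimensional complex normed spaces. -/
def ContinuousARP : Prop :=
  ∀ (X Y : Type u) (_ : NormedAddCommGroup X) (_ : NormedSpace ℂ X) (_ : FiniteDimensional ℂ X)
    (_ : NormedAddCommGroup Y) (_ : NormedSpace ℂ Y) (_ : FiniteDimensional ℂ Y)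
    (ε : ℝ), 0 < ε →
    ∃ (Z : Type u) (_ : NormedAddCommGroup Z) (_ : NormedSpace ℂ Z)
      (_ : FiniteDimensional ℂ Z),
      ∀ c : {φ : X →L[ℂ] Z // IsLinIsomEmb φ} → ℝ,
        LipschitzWith 1 c → (∀ φ, c φ ∈ Set.Icc (0 : ℝ) 1) →
        ∃ (γ : Y →L[ℂ] Z) (_ : IsLinIsomEmb γ),
          ∀ (η₀ η₁ : X →L[ℂ] Y), IsLinIsomEmb η₀ → IsLinIsomEmb η₁ →
            ∀ (h₀ : IsLinIsomEmb (γ.comp η₀)) (h₁ : IsLinIsomEmb (γ.comp η₁)),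
              |c ⟨γ.comp η₀, h₀⟩ - c ⟨γ.comp η₁, h₁⟩| ≤ ε

/-- The discrete approximate Ramsey property (with colorings by finitely many colors) of the
class of finite-dimensional complex normed spaces. -/
def DiscreteARP : Prop :=
  ∀ (X Y : Type u) (_ : NormedAddCommGroup X) (_ : NormedSpace ℂ X) (_ : FiniteDimensional ℂ X)
    (_ : NormedAddCommGroup Y) (_ : NormedSpace ℂ Y) (_ : FiniteDimensional ℂ Y)
    (r : ℕ) (ε : ℝ), 0 < ε →
    ∃ (Z : Type u) (_ : NormedAddCommGroup Z) (_ : NormedSpace ℂ Z)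
      (_ : FiniteDimensional ℂ Z),
      ∀ c : {φ : X →L[ℂ] Z // IsLinIsomEmb φ} → Fin r,
        ∃ (γ : Y →L[ℂ] Z) (_ : IsLinIsomEmb γ) (j : Fin r),
          ∀ η : X →L[ℂ] Y, IsLinIsomEmb η →
            ∃ (ξ : X →L[ℂ] Z) (hξ : IsLinIsomEmb ξ),
              c ⟨ξ, hξ⟩ = j ∧ ‖γ.comp η - ξ‖ ≤ ε

/-- The compact approximate Ramsey property (with `1`-Lipschitz colorings valued in an arbitrary
compact metric space) of the class of finite-dimensional complex normed spaces. -/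
def CompactARP : Prop :=
  ∀ (X Y : Type u) (_ : NormedAddCommGroup X) (_ : NormedSpace ℂ X) (_ : FiniteDimensional ℂ X)
    (_ : NormedAddCommGroup Y) (_ : NormedSpace ℂ Y) (_ : FiniteDimensional ℂ Y)
    (K : Type) (_ : MetricSpace K) (_ : CompactSpace K)
    (ε : ℝ), 0 < ε →
    ∃ (Z : Type u) (_ : NormedAddCommGroup Z) (_ : NormedSpace ℂ Z)
      (_ : FiniteDimensional ℂ Z),
      ∀ c : {φ : X →L[ℂ] Z // IsLinIsomEmb φ} → K,
        LipschitzWith 1 c →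
        ∃ (γ : Y →L[ℂ] Z) (_ : IsLinIsomEmb γ),
          ∀ (η₀ η₁ : X →L[ℂ] Y), IsLinIsomEmb η₀ → IsLinIsomEmb η₁ →
            ∀ (h₀ : IsLinIsomEmb (γ.comp η₀)) (h₁ : IsLinIsomEmb (γ.comp η₁)),
              dist (c ⟨γ.comp η₀, h₀⟩) (c ⟨γ.comp η₁, h₁⟩) ≤ ε

/-- Composition of linear isometric embeddings. -/
lemma IsLinIsomEmb.comp' {X Y Z : Type*} [NormedAddCommGroup X] [NormedSpace ℂ X]
    [NormedAddCommGroup Y] [NormedSpace ℂ Y] [NormedAddCommGroup Z] [NormedSpace ℂ Z]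
    {γ : Y →L[ℂ] Z} {η : X →L[ℂ] Y} (hγ : IsLinIsomEmb γ) (hη : IsLinIsomEmb η) :
    IsLinIsomEmb (γ.comp η) := fun x => by
  rw [ContinuousLinearMap.comp_apply, hγ, hη]

/-- Post-composition with a linear isometric embedding is `1`-Lipschitz. -/
lemma lipschitz_postcomp {X Y Z : Type*} [NormedAddCommGroup X] [NormedSpace ℂ X]
    [NormedAddCommGroup Y] [NormedSpace ℂ Y] [NormedAddCommGroup Z] [NormedSpace ℂ Z]
    {γ : Y →L[ℂ] Z} (hγ : IsLinIsomEmb γ) :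
    LipschitzWith 1 (fun φ : {φ : X →L[ℂ] Y // IsLinIsomEmb φ} =>
      (⟨γ.comp φ.1, hγ.comp' φ.2⟩ : {φ : X →L[ℂ] Z // IsLinIsomEmb φ})) := by
  refine LipschitzWith.of_dist_le_mul fun φ ψ => ?_
  rw [Subtype.dist_eq, Subtype.dist_eq, dist_eq_norm, dist_eq_norm, NNReal.coe_one, one_mul]
  refine ContinuousLinearMap.opNorm_le_bound _ (norm_nonneg _) fun x => ?_
  have : (γ.comp φ.1 - γ.comp ψ.1) x = γ ((φ.1 - ψ.1) x) := by simp
  rw [this, hγ]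
  exact ContinuousLinearMap.le_opNorm _ _

/-- The continuous property for finitely many colorings simultaneously. -/
lemma ContinuousARP.multi (H : ContinuousARP.{u}) (n : ℕ) :
    ∀ (X Y : Type u) (_ : NormedAddCommGroup X) (_ : NormedSpace ℂ X)
    (_ : FiniteDimensional ℂ X)
    (_ : NormedAddCommGroup Y) (_ : NormedSpace ℂ Y) (_ : FiniteDimensional ℂ Y)
    (ε : ℝ), 0 < ε →
    ∃ (Z : Type u) (_ : NormedAddCommGroup Z) (_ : NormedSpace ℂ Z)
      (_ : FiniteDimensional ℂ Z),
      ∀ c : Fin n → {φ : X →L[ℂ] Z // IsLinIsomEmb φ} → ℝ,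
        (∀ i, LipschitzWith 1 (c i)) → (∀ i φ, c i φ ∈ Set.Icc (0 : ℝ) 1) →
        ∃ (γ : Y →L[ℂ] Z) (_ : IsLinIsomEmb γ),
          ∀ (i : Fin n) (η₀ η₁ : X →L[ℂ] Y), IsLinIsomEmb η₀ → IsLinIsomEmb η₁ →
            ∀ (h₀ : IsLinIsomEmb (γ.comp η₀)) (h₁ : IsLinIsomEmb (γ.comp η₁)),
              |c i ⟨γ.comp η₀, h₀⟩ - c i ⟨γ.comp η₁, h₁⟩| ≤ ε := by
  induction n with
  | zero =>
    intro X Y _ _ _ _ _ _ ε _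
    exact ⟨Y, inferInstance, inferInstance, inferInstance, fun c _ _ =>
      ⟨ContinuousLinearMap.id ℂ Y, fun x => rfl, fun i => i.elim0⟩⟩
  | succ n ih =>
    intro X Y iX jX kX _ _ _ ε hε
    obtain ⟨Z', i1, i2, i3, h'⟩ := ih X Y iX jX kX inferInstance inferInstance inferInstance ε hε
    obtain ⟨Z, j1, j2, j3, h⟩ := H X Z' iX jX kX i1 i2 i3 ε hε
    refine ⟨Z, j1, j2, j3, fun c hc hc' => ?_⟩
    obtain ⟨γ', hγ', hh'⟩ := h (c 0) (hc 0) (hc' 0)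
    obtain ⟨γ, hγ, hh⟩ := h' (fun i φ => c i.succ ⟨γ'.comp φ.1, hγ'.comp' φ.2⟩)
      (fun i => by
        have := (hc i.succ).comp (lipschitz_postcomp (X := X) hγ')
        rw [one_mul] at this
        exact this)
      (fun i φ => hc' _ _)
    refine ⟨γ'.comp γ, hγ'.comp' hγ, fun i η₀ η₁ e₀ e₁ h₀ h₁ => ?_⟩
    refine Fin.cases ?_ (fun i => ?_) i
    · exact hh' (γ.comp η₀) (γ.comp η₁) (hγ.comp' e₀) (hγ.comp' e₁) h₀ h₁
    · exact hh i η₀ η₁ e₀ e₁ (hγ.comp' e₀) (hγ.comp' e₁)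

lemma ContinuousARP.discrete (H : ContinuousARP.{u}) : DiscreteARP.{u} := by
  intro X Y iX jX kX iY jY kY r ε hε
  rcases Nat.eq_zero_or_pos r with rfl | hr
  · exact ⟨X, iX, jX, kX, fun c => (c ⟨ContinuousLinearMap.id ℂ X, fun x => rfl⟩).elim0⟩
  obtain ⟨δ, hδ, hδε, hδ1⟩ : ∃ δ : ℝ, 0 < δ ∧ δ < ε ∧ δ < 1 :=
    ⟨min ε 1 / 2, by positivity, by
      have := min_le_left ε 1
      linarith, by
      have := min_le_right ε 1
      linarith⟩
  obtain ⟨Z, i1, i2, i3, h⟩ := H.multi r X Y iX jX kX iY jY kY δ hδ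
  refine ⟨Z, i1, i2, i3, fun c => ?_⟩
  obtain ⟨γ, hγ, hh⟩ := h (fun j φ => min (Metric.infDist φ {ψ | c ψ = j}) 1)
    (fun j => (Metric.lipschitz_infDist_pt _).min_const 1)
    (fun j φ => ⟨le_min Metric.infDist_nonneg zero_le_one, min_le_right _ _⟩)
  by_cases hne : ∃ η₀ : X →L[ℂ] Y, IsLinIsomEmb η₀
  · obtain ⟨η₀, e₀⟩ := hne
    refine ⟨γ, hγ, c ⟨γ.comp η₀, hγ.comp' e₀⟩, fun η e => ?_⟩
    have key := hh (c ⟨γ.comp η₀, hγ.comp' e₀⟩) η η₀ e e₀ (hγ.comp' e) (hγ.comp' e₀)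
    have hmem : (⟨γ.comp η₀, hγ.comp' e₀⟩ : {φ : X →L[ℂ] Z // IsLinIsomEmb φ}) ∈
        {ψ | c ψ = c ⟨γ.comp η₀, hγ.comp' e₀⟩} := rfl
    rw [Metric.infDist_zero_of_mem hmem, min_eq_left zero_le_one, sub_zero] at key
    have key2 := lt_of_le_of_lt ((le_abs_self _).trans key) (lt_min hδε hδ1)
    have key3 : Metric.infDist (⟨γ.comp η, hγ.comp' e⟩ : {φ : X →L[ℂ] Z // IsLinIsomEmb φ})
        {ψ | c ψ = c ⟨γ.comp η₀, hγ.comp' e₀⟩} < ε := by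
      rcases min_lt_iff.1 (key2.trans_le (min_le_right _ _)) with h1 | h1
      · rw [min_eq_left h1.le] at key2
        exact key2.trans_le (min_le_left _ _)
      · exact absurd h1 (lt_irrefl _)
    obtain ⟨ξ, hξ, hd⟩ := (Metric.infDist_lt_iff ⟨_, hmem⟩).1 key3
    refine ⟨ξ.1, ξ.2, hξ, ?_⟩
    rw [Subtype.dist_eq, dist_eq_norm] at hd
    exact hd.le
  · exact ⟨γ, hγ, ⟨0, hr⟩, fun η e => (hne ⟨η, e⟩).elim⟩

lemma DiscreteARP.compact (H : DiscreteARP.{u}) : CompactARP.{u} := by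
  intro X Y iX jX kX iY jY kY K _ _ ε hε
  obtain ⟨t, -, htf, ht⟩ := Metric.finite_approx_of_totallyBounded
    (isCompact_univ (X := K)).totallyBounded (ε / 4) (by positivity)
  obtain ⟨r, g, -, hg⟩ := htf.fin_param
  obtain ⟨Z, i1, i2, i3, h⟩ := H X Y iX jX kX iY jY kY r (ε / 4) (by positivity)
  refine ⟨Z, i1, i2, i3, fun c hc => ?_⟩
  have hcov : ∀ k : K, ∃ j : Fin r, dist k (g j) < ε / 4 := by
    intro k
    have := ht (Set.mem_univ k)
    rw [Set.mem_iUnion₂] at this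
    obtain ⟨y, hy, hk⟩ := this
    rw [← hg] at hy
    obtain ⟨j, rfl⟩ := hy
    exact ⟨j, hk⟩
  choose f hf using hcov
  obtain ⟨γ, hγ, j, hh⟩ := h (fun φ => f (c φ))
  have key : ∀ (η : X →L[ℂ] Y), IsLinIsomEmb η → ∀ h₀ : IsLinIsomEmb (γ.comp η),
      dist (c ⟨γ.comp η, h₀⟩) (g j) ≤ ε / 2 := by
    intro η e h₀
    obtain ⟨ξ, hξ, hj, hd⟩ := hh η e
    have h1 := hc.dist_le_mul ⟨γ.comp η, h₀⟩ ⟨ξ, hξ⟩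
    rw [Subtype.dist_eq, dist_eq_norm, NNReal.coe_one, one_mul] at h1
    have h2 := hf (c ⟨ξ, hξ⟩)
    rw [hj] at h2
    have h3 := dist_triangle (c ⟨γ.comp η, h₀⟩) (c ⟨ξ, hξ⟩) (g j)
    have h4 : dist (c ⟨γ.comp η, h₀⟩) (c ⟨ξ, hξ⟩) ≤ ε / 4 := h1.trans hd
    linarith
  refine ⟨γ, hγ, fun η₀ η₁ e₀ e₁ h₀ h₁ => ?_⟩
  have h1 := key η₀ e₀ h₀
  have h2 := key η₁ e₁ h₁
  have h3 := dist_triangle_right (c ⟨γ.comp η₀, h₀⟩) (c ⟨γ.comp η₁, h₁⟩) (g j)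
  linarith

lemma CompactARP.continuous (H : CompactARP.{u}) : ContinuousARP.{u} := by
  intro X Y iX jX kX iY jY kY ε hε
  obtain ⟨Z, i1, i2, i3, h⟩ := H X Y iX jX kX iY jY kY (Set.Icc (0 : ℝ) 1)
    inferInstance inferInstance ε hε
  refine ⟨Z, i1, i2, i3, fun c hc hc' => ?_⟩
  exact h (fun φ => ⟨c φ, hc' φ⟩) (fun φ ψ => hc φ ψ)

/-- For the class of finite-dimensional complex normed spaces, the approximate Ramsey property,
the discrete approximate Ramsey property, and the compact approximate Ramsey property are all
equivalent. -/
theorem arp_iff_discrete_iff_compact :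
    (ContinuousARP.{u} ↔ DiscreteARP.{u}) ∧ (DiscreteARP.{u} ↔ CompactARP.{u}) := by
  exact ⟨⟨fun h => h.discrete, fun h => h.compact.continuous⟩,
    ⟨fun h => h.compact, fun h => h.continuous.discrete⟩⟩
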